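/- arXiv:1906.03851 — 2 statements merged into one kernel-verified Lean document; each statement's English description precedes it below -/
import Mathlib

section
/- (Proposition 3.1.) Let F be the logistic function, θ ∈ ℝ, δ_1,…,δ_k ∈ ℝ. Let μ be a probability measure on {0,1}^k concentrated on the Guttman space Ω^G whose coordinate projections Y^{(1)},…,Y^{(k)} satisfy the conditional Rasch models μ(Y^{(r)} = 1 ∧ Y^{(r−1)} = 1) = F(θ − δ_r) · μ(Y^{(r−1)} = 1) for all r = 1,…,k, with the convention that Y^{(0)} ≡ 1. Then the sum Y = Y^{(1)} + … + Y^{(k)} follows the sequential model, and explicitly μ(Y = 0) = 1 − F(θ − δ_1), μ(Y = r) = (1 − F(θ − δ_{r+1})) ∏_{j=1}^r F(θ − δ_j) for 1 ≤ r ≤ k−1, and μ(Y = k) = ∏_{j=1}^k F(θ − δ_j). -/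
open scoped Classical

/-- The logistic function `F(x) = exp x / (1 + exp x)`. -/
noncomputable def logistic (x : ℝ) : ℝ := Real.exp x / (1 + Real.exp x)

/-- A vector in `{0,1}^k` is a Guttman vector if its coordinates are nonincreasing,
i.e. it has the form `(1,…,1,0,…,0)`. -/
def IsGuttman {k : ℕ} (y : Fin k → Bool) : Prop :=
  ∀ i j : Fin k, i ≤ j → y j = true → y i = true

/-- The sum `Y = Y⁽¹⁾ + … + Y⁽ᵏ⁾` of the binary coordinates. -/
def gsum {k : ℕ} (y : Fin k → Bool) : ℕ :=
  ∑ i : Fin k, if y i then 1 else 0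

/-- The `r`-th coordinate `Y⁽ʳ⁾` of `y ∈ {0,1}^k` (for `1 ≤ r ≤ k`), with the
conventions `Y⁽⁰⁾ ≡ 1` and `Y⁽ʳ⁾ ≡ 0` for `r > k`. -/
def coordExt {k : ℕ} (y : Fin k → Bool) (r : ℕ) : Bool :=
  if h0 : r = 0 then true
  else if h : r ≤ k then y ⟨r - 1, by omega⟩ else false

/-!
On a Guttman vector the event `Y⁽ʳ⁾ = 1` coincides with `r ≤ Y`, because the ones fill an initial
segment, and `Y⁽ʳ⁾ = 1` implies `Y⁽ʳ⁻¹⁾ = 1`. So the conditional Rasch equations are exactly the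
recursion `P(Y ≥ r) = F(θ - δ r) · P(Y ≥ r - 1)`. Iterating it gives `P(Y ≥ r)` as a product, and
differences of consecutive tails give the point probabilities.
-/

section FiniteSums

variable {α M : Type*} [AddCommMonoid M]

theorem sum_filter_congr_of_ne_zero {s : Finset α} {f : α → M} {p q : α → Prop}
    [DecidablePred p] [DecidablePred q] (h : ∀ a ∈ s, f a ≠ 0 → (p a ↔ q a)) :
    ∑ a ∈ s with p a, f a = ∑ a ∈ s with q a, f a := by
  rw [Finset.sum_filter, Finset.sum_filter]
  refine Finset.sum_congr rfl fun a ha => ?_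
  by_cases hfa : f a = 0
  · simp [hfa]
  · simp only [h a ha hfa]

variable [Fintype α]

/-- The tail `P(X ≥ r)` of an `ℕ`-valued random variable `X` on a finite sample space whose
outcomes have weights `μ`. -/
def tailSum (μ : α → M) (X : α → ℕ) (r : ℕ) : M :=
  ∑ a with r ≤ X a, μ a

theorem tailSum_zero (μ : α → M) (X : α → ℕ) : tailSum μ X 0 = ∑ a, μ a := by
  simp [tailSum]

theorem sum_filter_eq_add_tailSum_succ (μ : α → M) (X : α → ℕ) (r : ℕ) :
    (∑ a with X a = r, μ a) + tailSum μ X (r + 1) = tailSum μ X r := by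
  have hdisj : Disjoint (Finset.univ.filter fun a => X a = r)
      (Finset.univ.filter fun a => r + 1 ≤ X a) :=
    Finset.disjoint_filter.2 fun a _ _ => by lia
  rw [tailSum, tailSum, ← Finset.sum_union hdisj, ← Finset.filter_or]
  congr! 3
  lia

theorem sum_filter_eq_eq_tailSum_of_le {X : α → ℕ} {k : ℕ} (μ : α → M) (hX : ∀ a, X a ≤ k) :
    ∑ a with X a = k, μ a = tailSum μ X k :=
  sum_filter_congr_of_ne_zero fun a _ _ => (hX a).ge_iff_eq.symm

end FiniteSums

/-- The sequential model with `k` steps for the random variable `X` under the weights `μ`: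
`P(X ≥ r) = p r · P(X ≥ r - 1)` for `r = 1, …, k`. The step probabilities `p r`, which are
`F(θ - δ r)` in the logistic case, are arbitrary semiring elements. -/
def IsSequential {α R : Type*} [Fintype α] [Semiring R] (k : ℕ) (p : ℕ → R) (μ : α → R)
    (X : α → ℕ) : Prop :=
  ∀ r ∈ Finset.Icc 1 k, tailSum μ X r = p r * tailSum μ X (r - 1)

namespace IsSequential

variable {α R : Type*} [Fintype α] {k : ℕ} {X : α → ℕ}

theorem tailSum_eq_prod_mul_sum [CommSemiring R] {p : ℕ → R} {μ : α → R}
    (h : IsSequential k p μ X) {r : ℕ} (hr : r ≤ k) :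
    tailSum μ X r = (∏ j ∈ Finset.Icc 1 r, p j) * ∑ a, μ a := by
  induction r with
  | zero => simp [tailSum_zero]
  | succ n ih =>
    calc tailSum μ X (n + 1)
        = p (n + 1) * tailSum μ X n := h (n + 1) (Finset.mem_Icc.2 ⟨by lia, hr⟩)
      _ = p (n + 1) * ((∏ j ∈ Finset.Icc 1 n, p j) * ∑ a, μ a) := by rw [ih (by lia)]
      _ = (∏ j ∈ Finset.Icc 1 (n + 1), p j) * ∑ a, μ a := by
        rw [Finset.prod_Icc_succ_top (by lia)]
        ring

theorem sum_filter_eq_of_lt [CommRing R] {p : ℕ → R} {μ : α → R}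
    (h : IsSequential k p μ X) {r : ℕ} (hr : r < k) :
    ∑ a with X a = r, μ a
      = (1 - p (r + 1)) * (∏ j ∈ Finset.Icc 1 r, p j) * ∑ a, μ a := by
  rw [eq_sub_of_add_eq (sum_filter_eq_add_tailSum_succ μ X r), h.tailSum_eq_prod_mul_sum hr.le,
    h.tailSum_eq_prod_mul_sum hr, Finset.prod_Icc_succ_top (by lia)]
  ring

theorem sum_filter_eq_of_forall_le [CommSemiring R] {p : ℕ → R} {μ : α → R}
    (h : IsSequential k p μ X) (hX : ∀ a, X a ≤ k) :
    ∑ a with X a = k, μ a = (∏ j ∈ Finset.Icc 1 k, p j) * ∑ a, μ a := by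
  rw [sum_filter_eq_eq_tailSum_of_le μ hX, h.tailSum_eq_prod_mul_sum le_rfl]

end IsSequential

section Guttman

variable {k : ℕ} {y : Fin k → Bool}

theorem gsum_eq_card_filter (y : Fin k → Bool) :
    gsum y = (Finset.univ.filter fun i => y i = true).card :=
  (Finset.card_filter _ _).symm

theorem gsum_le (y : Fin k → Bool) : gsum y ≤ k := by
  rw [gsum_eq_card_filter]
  exact card_finset_fin_le _

theorem coordExt_zero (y : Fin k → Bool) : coordExt y 0 = true := rfl

theorem coordExt_succ (y : Fin k → Bool) (i : Fin k) : coordExt y (i + 1) = y i := by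
  simp [coordExt]

theorem coordExt_of_lt (y : Fin k → Bool) {r : ℕ} (hr : k < r) : coordExt y r = false := by
  rw [coordExt, dif_neg (by lia), dif_neg (by lia)]

theorem IsGuttman.lt_gsum_iff (hy : IsGuttman y) (i : Fin k) : i < gsum y ↔ y i = true := by
  rw [gsum_eq_card_filter]
  constructor
  · intro hlt
    by_contra hi
    have ones_subset : (Finset.univ.filter fun j => y j = true) ⊆ Finset.Iio i := fun j hj =>
      Finset.mem_Iio.2 <| lt_of_not_ge fun hij => hi (hy i j hij (Finset.mem_filter.1 hj).2)
    have := Finset.card_le_card ones_subset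
    rw [Fin.card_Iio] at this
    lia
  · intro hi
    have subset_ones : Finset.Iic i ⊆ Finset.univ.filter fun j => y j = true := fun j hj =>
      Finset.mem_filter.2 ⟨Finset.mem_univ j, hy j i (Finset.mem_Iic.1 hj) hi⟩
    have := Finset.card_le_card subset_ones
    rw [Fin.card_Iic] at this
    lia

theorem IsGuttman.le_gsum_iff (hy : IsGuttman y) (r : ℕ) :
    r ≤ gsum y ↔ coordExt y r = true := by
  rcases r with - | n
  · simp [coordExt_zero]
  rcases lt_or_ge n k with hn | hn
  · rw [coordExt_succ y ⟨n, hn⟩, ← hy.lt_gsum_iff, Nat.succ_le_iff]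
  · have := gsum_le y
    simp only [coordExt_of_lt y (Nat.lt_succ_of_le hn), Bool.false_eq_true, iff_false]
    lia

theorem IsGuttman.le_gsum_iff_coordExt_and_pred (hy : IsGuttman y) (r : ℕ) :
    r ≤ gsum y ↔ coordExt y r = true ∧ coordExt y (r - 1) = true := by
  rw [← hy.le_gsum_iff, ← hy.le_gsum_iff]
  lia

theorem isSequential_gsum_of_conditional {R : Type*} [Semiring R] {p : ℕ → R}
    {μ : (Fin k → Bool) → R} (hconc : ∀ y, ¬ IsGuttman y → μ y = 0)
    (hcond : ∀ r ∈ Finset.Icc 1 k,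
      ∑ y with coordExt y r = true ∧ coordExt y (r - 1) = true, μ y
        = p r * ∑ y with coordExt y (r - 1) = true, μ y) :
    IsSequential k p μ gsum := by
  have guttman_of_ne_zero : ∀ y, μ y ≠ 0 → IsGuttman y := fun y => not_imp_comm.1 (hconc y)
  intro r hr
  calc tailSum μ gsum r
      = ∑ y with coordExt y r = true ∧ coordExt y (r - 1) = true, μ y :=
        sum_filter_congr_of_ne_zero fun y _ hμ =>
          (guttman_of_ne_zero y hμ).le_gsum_iff_coordExt_and_pred r
    _ = p r * ∑ y with coordExt y (r - 1) = true, μ y := hcond r hr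
    _ = p r * tailSum μ gsum (r - 1) := by
        congr 1
        exact sum_filter_congr_of_ne_zero fun y _ hμ =>
          ((guttman_of_ne_zero y hμ).le_gsum_iff (r - 1)).symm

end Guttman

theorem sequential_model_from_guttman_conditional_rasch_general {R : Type*} [CommRing R]
    (k : ℕ) (hk : 1 ≤ k) (p : ℕ → R) (μ : (Fin k → Bool) → R) (hsum : ∑ y, μ y = 1)
    (hconc : ∀ y, ¬ IsGuttman y → μ y = 0)
    (hcond : ∀ r ∈ Finset.Icc 1 k,
      ∑ y with coordExt y r = true ∧ coordExt y (r - 1) = true, μ y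
        = p r * ∑ y with coordExt y (r - 1) = true, μ y) :
    IsSequential k p μ gsum ∧
    ∑ y with gsum y = 0, μ y = 1 - p 1 ∧
    (∀ r, 1 ≤ r → r ≤ k - 1 →
      ∑ y with gsum y = r, μ y = (1 - p (r + 1)) * ∏ j ∈ Finset.Icc 1 r, p j) ∧
    ∑ y with gsum y = k, μ y = ∏ j ∈ Finset.Icc 1 k, p j := by
  have hseq : IsSequential k p μ gsum := isSequential_gsum_of_conditional hconc hcond
  refine ⟨hseq, ?_, fun r _ hr => ?_, ?_⟩
  · simpa [hsum] using hseq.sum_filter_eq_of_lt hk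
  · simpa [hsum] using hseq.sum_filter_eq_of_lt (r := r) (by lia)
  · simpa [hsum] using hseq.sum_filter_eq_of_forall_le gsum_le

/-- Proposition 3.1: if a probability measure `μ` on `{0,1}^k` is
concentrated on the Guttman space and its coordinates satisfy the conditional Rasch
models `μ(Y⁽ʳ⁾ = 1 ∧ Y⁽ʳ⁻¹⁾ = 1) = F(θ - δ r) · μ(Y⁽ʳ⁻¹⁾ = 1)` for `r = 1,…,k`
(with `Y⁽⁰⁾ ≡ 1`), then the sum `Y` follows the sequential model, with the explicit
probabilities `μ(Y = 0) = 1 - F(θ - δ 1)`,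
`μ(Y = r) = (1 - F(θ - δ (r+1))) ∏_{j=1}^r F(θ - δ j)` for `1 ≤ r ≤ k - 1`, and
`μ(Y = k) = ∏_{j=1}^k F(θ - δ j)`. -/
theorem sequential_model_from_guttman_conditional_rasch
    (k : ℕ) (hk : 1 ≤ k) (θ : ℝ) (δ : ℕ → ℝ)
    (μ : (Fin k → Bool) → ℝ)
    (hnn : ∀ y, 0 ≤ μ y) (hsum : ∑ y, μ y = 1)
    (hconc : ∀ y, ¬ IsGuttman y → μ y = 0)
    (hrasch : ∀ r ∈ Finset.Icc 1 k,
      (∑ y ∈ Finset.univ.filter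
          (fun y : Fin k → Bool => coordExt y r = true ∧ coordExt y (r - 1) = true), μ y)
        = logistic (θ - δ r) *
          ∑ y ∈ Finset.univ.filter
            (fun y : Fin k → Bool => coordExt y (r - 1) = true), μ y) :
    (∀ r ∈ Finset.Icc 1 k,
      (∑ y ∈ Finset.univ.filter (fun y : Fin k → Bool => r ≤ gsum y), μ y)
        = logistic (θ - δ r) *
          ∑ y ∈ Finset.univ.filter (fun y : Fin k → Bool => r - 1 ≤ gsum y), μ y) ∧
    (∑ y ∈ Finset.univ.filter (fun y : Fin k → Bool => gsum y = 0), μ y)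
      = 1 - logistic (θ - δ 1) ∧
    (∀ r, 1 ≤ r → r ≤ k - 1 →
      (∑ y ∈ Finset.univ.filter (fun y : Fin k → Bool => gsum y = r), μ y)
        = (1 - logistic (θ - δ (r + 1))) * ∏ j ∈ Finset.Icc 1 r, logistic (θ - δ j)) ∧
    (∑ y ∈ Finset.univ.filter (fun y : Fin k → Bool => gsum y = k), μ y)
      = ∏ j ∈ Finset.Icc 1 k, logistic (θ - δ j) := by
  exact sequential_model_from_guttman_conditional_rasch_general k hk
    (fun r => logistic (θ - δ r)) μ hsum hconc hrasch
end

section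
/- Let k = 2, let F be the logistic function, θ, δ_1, δ_2 ∈ ℝ. Let μ̃ be the product measure on {0,1}² with independent Bernoulli coordinates of success probabilities F(θ − δ_1) and F(θ − δ_2), and let μ be μ̃ conditioned on the Guttman space Ω^G = {(1,1),(1,0),(0,0)}. Then the marginal odds of the coordinates under μ satisfy μ(Y^{(1)} = 1)/μ(Y^{(1)} = 0) = exp(θ − δ_1) / (1 − F(θ − δ_2)) and μ(Y^{(2)} = 1)/μ(Y^{(2)} = 0) = F(θ − δ_1) · exp(θ − δ_2). In particular, the marginals of Y^{(1)} and Y^{(2)} under μ do not follow the binary Rasch models with parameters (θ, δ_1) and (θ, δ_2). -/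
/-!
Conditioning on an event rescales all masses inside it by the same factor, so the odds under `μ`
are ratios of unconditioned masses restricted to the Guttman space. With success probabilities `p`
and `q`, discarding `(0,1)` leaves the masses `p` and `(1 - p)(1 - q)` for the values `1` and `0` of
the first item, and `pq` and `1 - q` for those of the second; the logistic function has odds `exp`.
The total mass `p + (1 - p)(1 - q)` lies strictly between `p` and `1`, hence the success probability
`p / (p + (1 - p)(1 - q))` of the first item exceeds `p`, and that of the second,
`pq / (p + (1 - p)(1 - q))`, is below `q`.
-/

open scoped Classical

/-- The product (independent Bernoulli) probability mass function on `{0,1}²`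
with success probabilities `F(θ - δ₁)` and `F(θ - δ₂)`. -/
noncomputable def prodBer2 (θ δ₁ δ₂ : ℝ) (y : Bool × Bool) : ℝ :=
  (if y.1 then logistic (θ - δ₁) else 1 - logistic (θ - δ₁)) *
    (if y.2 then logistic (θ - δ₂) else 1 - logistic (θ - δ₂))

/-- The Guttman space `Ω^G = {(1,1), (1,0), (0,0)} ⊆ {0,1}²`. -/
def guttman2 : Finset (Bool × Bool) := {(true, true), (true, false), (false, false)}

section Conditioning

variable {α K : Type*} [DecidableEq α]

/-- The mass function `w` conditioned on the event `A`: restricted to `A` and normalized there. When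
`A` has mass zero this is the zero function, since `x / 0 = 0`. -/
def condMass [DivisionSemiring K] (w : α → K) (A : Finset α) (y : α) : K :=
  (if y ∈ A then w y else 0) / ∑ z ∈ A, w z

theorem sum_filter_condMass [Fintype α] [DivisionSemiring K] (w : α → K) (A : Finset α)
    (P : α → Prop) [DecidablePred P] :
    ∑ y with P y, condMass w A y = (∑ y ∈ A with P y, w y) / ∑ z ∈ A, w z := by
  simp only [condMass, ← Finset.sum_div, Finset.sum_ite_mem, Finset.filter_inter,
    Finset.univ_inter]

theorem sum_filter_condMass_div_sum_filter_condMass [Fintype α] [Semifield K] {w : α → K}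
    {A : Finset α} (hA : ∑ z ∈ A, w z ≠ 0) (P Q : α → Prop) [DecidablePred P] [DecidablePred Q] :
    (∑ y with P y, condMass w A y) / (∑ y with Q y, condMass w A y) =
      (∑ y ∈ A with P y, w y) / ∑ y ∈ A with Q y, w y := by
  rw [sum_filter_condMass, sum_filter_condMass, div_div_div_cancel_right₀ hA]

end Conditioning

section GuttmanMasses

variable {K : Type*} [Ring K]

/-- The mass function on `{0,1}²` of two independent Bernoulli variables with success
probabilities `p` and `q`; `prodBer2` is the case where both are values of `logistic`. -/
def bernoulliProd (p q : K) (y : Bool × Bool) : K :=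
  (if y.1 then p else 1 - p) * (if y.2 then q else 1 - q)

theorem sum_guttman2_bernoulliProd (p q : K) :
    ∑ y ∈ guttman2, bernoulliProd p q y = p + (1 - p) * (1 - q) := by
  simp [guttman2, bernoulliProd, ← add_assoc, ← mul_add]

theorem sum_guttman2_bernoulliProd_fst_true (p q : K) :
    ∑ y ∈ guttman2 with y.1 = true, bernoulliProd p q y = p := by
  simp [guttman2, bernoulliProd, Finset.filter_insert, Finset.filter_singleton, ← mul_add]

theorem sum_guttman2_bernoulliProd_fst_false (p q : K) :
    ∑ y ∈ guttman2 with y.1 = false, bernoulliProd p q y = (1 - p) * (1 - q) := by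
  simp [guttman2, bernoulliProd, Finset.filter_insert, Finset.filter_singleton]

theorem sum_guttman2_bernoulliProd_snd_true (p q : K) :
    ∑ y ∈ guttman2 with y.2 = true, bernoulliProd p q y = p * q := by
  simp [guttman2, bernoulliProd, Finset.filter_insert, Finset.filter_singleton]

theorem sum_guttman2_bernoulliProd_snd_false (p q : K) :
    ∑ y ∈ guttman2 with y.2 = false, bernoulliProd p q y = 1 - q := by
  simp [guttman2, bernoulliProd, Finset.filter_insert, Finset.filter_singleton, ← add_mul]

end GuttmanMasses

section GuttmanMarginals

variable {K : Type*} [Field K] [LinearOrder K] [IsStrictOrderedRing K] {p q : K}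

theorem sum_guttman2_bernoulliProd_pos (hp₀ : 0 < p) (hp₁ : p ≤ 1) (hq₁ : q ≤ 1) :
    0 < ∑ y ∈ guttman2, bernoulliProd p q y := by
  rw [sum_guttman2_bernoulliProd]
  exact add_pos_of_pos_of_nonneg hp₀ (mul_nonneg (sub_nonneg.2 hp₁) (sub_nonneg.2 hq₁))

theorem odds_fst_condMass_guttman2 (hp₀ : 0 < p) (hp₁ : p < 1) (hq₁ : q < 1) :
    (∑ y with y.1 = true, condMass (bernoulliProd p q) guttman2 y) /
        (∑ y with y.1 = false, condMass (bernoulliProd p q) guttman2 y) =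
      p / (1 - p) / (1 - q) := by
  rw [sum_filter_condMass_div_sum_filter_condMass
      (sum_guttman2_bernoulliProd_pos hp₀ hp₁.le hq₁.le).ne',
    sum_guttman2_bernoulliProd_fst_true, sum_guttman2_bernoulliProd_fst_false, div_div]

theorem odds_snd_condMass_guttman2 (hp₀ : 0 < p) (hp₁ : p < 1) (hq₁ : q < 1) :
    (∑ y with y.2 = true, condMass (bernoulliProd p q) guttman2 y) /
        (∑ y with y.2 = false, condMass (bernoulliProd p q) guttman2 y) =
      p * (q / (1 - q)) := by
  rw [sum_filter_condMass_div_sum_filter_condMass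
      (sum_guttman2_bernoulliProd_pos hp₀ hp₁.le hq₁.le).ne',
    sum_guttman2_bernoulliProd_snd_true, sum_guttman2_bernoulliProd_snd_false, mul_div_assoc]

theorem lt_marginal_fst_condMass_guttman2 (hp₀ : 0 < p) (hp₁ : p < 1) (hq₀ : 0 < q)
    (hq₁ : q ≤ 1) : p < ∑ y with y.1 = true, condMass (bernoulliProd p q) guttman2 y := by
  have hlt : ∑ y ∈ guttman2, bernoulliProd p q y < 1 :=
    calc ∑ y ∈ guttman2, bernoulliProd p q y
      _ = 1 - (1 - p) * q := by rw [sum_guttman2_bernoulliProd]; ring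
      _ < 1 := sub_lt_self 1 (mul_pos (sub_pos.2 hp₁) hq₀)
  rw [sum_filter_condMass, sum_guttman2_bernoulliProd_fst_true,
    lt_div_iff₀ (sum_guttman2_bernoulliProd_pos hp₀ hp₁.le hq₁)]
  exact mul_lt_of_lt_one_right hp₀ hlt

theorem marginal_snd_condMass_guttman2_lt (hp₀ : 0 < p) (hp₁ : p < 1) (hq₀ : 0 < q)
    (hq₁ : q < 1) : ∑ y with y.2 = true, condMass (bernoulliProd p q) guttman2 y < q := by
  have hlt : p < ∑ y ∈ guttman2, bernoulliProd p q y := by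
    rw [sum_guttman2_bernoulliProd]
    exact lt_add_of_pos_right p (mul_pos (sub_pos.2 hp₁) (sub_pos.2 hq₁))
  rw [sum_filter_condMass, sum_guttman2_bernoulliProd_snd_true, div_lt_iff₀ (hp₀.trans hlt),
    mul_comm p q]
  exact mul_lt_mul_of_pos_left hlt hq₀

end GuttmanMarginals

section Logistic

variable (x : ℝ)

theorem logistic_eq_sigmoid : logistic x = Real.sigmoid x := by
  rw [logistic, Real.sigmoid_def, Real.exp_neg]
  field_simp
  ring

theorem logistic_pos : 0 < logistic x :=
  logistic_eq_sigmoid x ▸ Real.sigmoid_pos x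

theorem logistic_lt_one : logistic x < 1 :=
  logistic_eq_sigmoid x ▸ Real.sigmoid_lt_one x

theorem logistic_div_one_sub_logistic : logistic x / (1 - logistic x) = Real.exp x := by
  rw [div_eq_iff (sub_pos.2 (logistic_lt_one x)).ne', logistic]
  field_simp
  ring

end Logistic

/-- for `μ` the product Bernoulli measure with success probabilities
`F(θ - δ₁)`, `F(θ - δ₂)` conditioned on the Guttman space, the marginal odds are
`μ(Y⁽¹⁾=1)/μ(Y⁽¹⁾=0) = exp(θ-δ₁)/(1 - F(θ-δ₂))` and
`μ(Y⁽²⁾=1)/μ(Y⁽²⁾=0) = F(θ-δ₁)·exp(θ-δ₂)`; in particular the marginals do not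
follow the binary Rasch models with parameters `(θ, δ₁)` and `(θ, δ₂)`. -/
theorem marginal_odds_in_conditioned_guttman_two_items
    (θ δ₁ δ₂ : ℝ) (μ : Bool × Bool → ℝ)
    (hμ : ∀ y, μ y = (if y ∈ guttman2 then prodBer2 θ δ₁ δ₂ y else 0) /
        ∑ z ∈ guttman2, prodBer2 θ δ₁ δ₂ z) :
    (∑ y ∈ Finset.univ.filter (fun y : Bool × Bool => y.1 = true), μ y) /
        (∑ y ∈ Finset.univ.filter (fun y : Bool × Bool => y.1 = false), μ y)
      = Real.exp (θ - δ₁) / (1 - logistic (θ - δ₂)) ∧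
    (∑ y ∈ Finset.univ.filter (fun y : Bool × Bool => y.2 = true), μ y) /
        (∑ y ∈ Finset.univ.filter (fun y : Bool × Bool => y.2 = false), μ y)
      = logistic (θ - δ₁) * Real.exp (θ - δ₂) ∧
    (∑ y ∈ Finset.univ.filter (fun y : Bool × Bool => y.1 = true), μ y)
      ≠ logistic (θ - δ₁) ∧
    (∑ y ∈ Finset.univ.filter (fun y : Bool × Bool => y.2 = true), μ y)
      ≠ logistic (θ - δ₂) := by
  obtain rfl : μ = condMass (bernoulliProd (logistic (θ - δ₁)) (logistic (θ - δ₂))) guttman2 :=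
    funext hμ
  have hp₀ := logistic_pos (θ - δ₁)
  have hp₁ := logistic_lt_one (θ - δ₁)
  have hq₀ := logistic_pos (θ - δ₂)
  have hq₁ := logistic_lt_one (θ - δ₂)
  refine ⟨?_, ?_, (lt_marginal_fst_condMass_guttman2 hp₀ hp₁ hq₀ hq₁.le).ne',
    (marginal_snd_condMass_guttman2_lt hp₀ hp₁ hq₀ hq₁).ne⟩
  · rw [odds_fst_condMass_guttman2 hp₀ hp₁ hq₁, logistic_div_one_sub_logistic]
  · rw [odds_snd_condMass_guttman2 hp₀ hp₁ hq₁, logistic_div_one_sub_logistic]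
end
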